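/- arXiv:math/9901156 — 5 statements merged into one kernel-verified Lean document; each statement's English description precedes it below -/
import Mathlib

section
/- Let K be a field, A a valuation subring of K with maximal ideal m, I the Iwahori subgroup of SL₂, B(K) the upper-triangular subgroup of SL₂(K), s = (0,1;−1,0), and for a ∈ K let u₋(a) = (1,0;a,1) be the lower unipotent matrix. Then for every a ∈ K and every w ∈ {1, s}, the matrix w·s·u₋(a) lies in I·w·B(K) ∪ I·w·s·B(K) (set products inside SL₂(K)). -/
open scoped Pointwise

/-- `SL₂(K)`. -/
abbrev SL2 (K : Type*) [Field K] := Matrix.SpecialLinearGroup (Fin 2) K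

/-- The Iwahori subgroup of `SL₂(K)` relative to a valuation subring `A` of `K`:
matrices with entries in `A` whose lower-left entry is a nonunit of `A`
(i.e. lies in the maximal ideal of `A`). -/
def Iwahori {K : Type*} [Field K] (A : ValuationSubring K) : Set (SL2 K) :=
  {g | (∀ i j, g.1 i j ∈ A) ∧ ∃ h : g.1 1 0 ∈ A, (⟨g.1 1 0, h⟩ : A) ∈ nonunits A}

/-- The upper triangular (BorelSL2) subgroup `B(K)` of `SL₂(K)`. -/
def BorelSL2 (K : Type*) [Field K] : Set (SL2 K) := {g | g.1 1 0 = 0}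

/-- The Weyl element `s = (0,1;−1,0)`. -/
def sMat (K : Type*) [Field K] : SL2 K :=
  ⟨!![0, 1; -1, 0], by simp [Matrix.det_fin_two_of]⟩

/-- The lower unipotent matrix `u₋(a) = (1,0;a,1)`. -/
def uLower {K : Type*} [Field K] (a : K) : SL2 K :=
  ⟨!![1, 0; a, 1], by simp [Matrix.det_fin_two_of]⟩

/-!
The subgroups `I` and `B(K)` satisfy the Iwasawa decomposition `SL₂(K) = I·B(K) ∪ I·s·B(K)`: if the
first column of `g` is `(x, y)`, then either `y = c * x` with `c ∈ m`, and a lower unipotent element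
of `I` clears `y`, or `x = c * y` with `c ∈ A`, and an upper unipotent element of `I` clears `x`,
which leaves an element of `s·B(K)`. As `s² = -1` lies in `B(K)`, multiplying `w ∈ {1, s}` by `s` on
the right only exchanges the two cells, so that `I·w·B(K) ∪ I·w·s·B(K)` is the whole group.
-/

open Matrix.SpecialLinearGroup (transvection transvection_coe transvection_mul_neg)

section

variable {K : Type*} [Field K]

theorem exists_mem_nonunits_eq_mul_or_exists_mem_eq_mul (A : ValuationSubring K) (x y : K) :
    (∃ c ∈ A.nonunits, y = c * x) ∨ ∃ c ∈ A, x = c * y := by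
  rcases lt_or_ge (A.valuation y) (A.valuation x) with hlt | hle
  · have hx : x ≠ 0 := A.valuation.ne_zero_iff.mp hlt.ne_zero
    refine .inl ⟨y / x, ?_, (div_mul_cancel₀ y hx).symm⟩
    rwa [A.mem_nonunits_iff, map_div₀, div_lt_one₀ hlt.pos]
  · have hxy : y = 0 → x = 0 := by
      rintro rfl
      simpa using hle
    refine .inr ⟨x / y, ?_, (div_mul_cancel_of_imp hxy).symm⟩
    rw [← A.valuation_le_one_iff, map_div₀]
    exact div_le_one_of_le₀ hle zero_le

theorem coe_sMat : (sMat K : Matrix (Fin 2) (Fin 2) K) = !![0, 1; -1, 0] :=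
  rfl

theorem sMat_mul_sMat : sMat K * sMat K = -1 := by
  apply Subtype.ext
  simp [coe_sMat, Matrix.one_fin_two]

theorem singleton_neg_one_mul_borelSL2 : ({-1} : Set (SL2 K)) * BorelSL2 K = BorelSL2 K := by
  ext g
  simp [BorelSL2]

variable {A : ValuationSubring K} {c : K} {g : SL2 K}

theorem mem_singleton_sMat_mul_borelSL2_iff :
    g ∈ ({sMat K} : Set (SL2 K)) * BorelSL2 K ↔ g.1 0 0 = 0 := by
  simp [BorelSL2, coe_sMat, Matrix.adjugate_fin_two, Matrix.mul_apply]

theorem mem_iwahori_iff : g ∈ Iwahori A ↔ (∀ i j, g.1 i j ∈ A) ∧ g.1 1 0 ∈ A.nonunits := by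
  rw [A.mem_nonunits_iff_exists_mem_maximalIdeal]
  rfl

theorem transvection_zero_one_mem_iwahori (hc : c ∈ A) :
    transvection zero_ne_one c ∈ Iwahori A := by
  simp [mem_iwahori_iff, transvection_coe, Fin.forall_fin_two, hc, A.one_mem, A.zero_mem,
    A.nonunits.zero_mem]

theorem transvection_one_zero_mem_iwahori (hc : c ∈ A.nonunits) :
    transvection one_ne_zero c ∈ Iwahori A := by
  have hcA : c ∈ A := A.nonunits_subset hc
  simp [mem_iwahori_iff, transvection_coe, Fin.forall_fin_two, hc, hcA, A.one_mem, A.zero_mem]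

theorem mem_iwahori_mul_borelSL2_of_eq_mul (hc : c ∈ A.nonunits) (hg : g.1 1 0 = c * g.1 0 0) :
    g ∈ Iwahori A * BorelSL2 K := by
  have hB : transvection one_ne_zero (-c) * g ∈ BorelSL2 K := by
    simp [BorelSL2, transvection_coe, Matrix.add_mul, hg]
  refine ⟨_, transvection_one_zero_mem_iwahori hc, _, hB, ?_⟩
  simp only [← mul_assoc, transvection_mul_neg, one_mul]

theorem mem_iwahori_mul_sMat_mul_borelSL2_of_eq_mul (hc : c ∈ A) (hg : g.1 0 0 = c * g.1 1 0) :
    g ∈ Iwahori A * {sMat K} * BorelSL2 K := by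
  have hsB : transvection zero_ne_one (-c) * g ∈ ({sMat K} : Set (SL2 K)) * BorelSL2 K := by
    rw [mem_singleton_sMat_mul_borelSL2_iff]
    simp [transvection_coe, Matrix.add_mul, hg]
  rw [mul_assoc]
  refine ⟨_, transvection_zero_one_mem_iwahori hc, _, hsB, ?_⟩
  simp only [← mul_assoc, transvection_mul_neg, one_mul]

theorem iwahori_mul_borelSL2_union_eq_univ (A : ValuationSubring K) :
    Iwahori A * BorelSL2 K ∪ Iwahori A * {sMat K} * BorelSL2 K = Set.univ := by
  refine Set.eq_univ_of_forall fun g ↦ ?_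
  rcases exists_mem_nonunits_eq_mul_or_exists_mem_eq_mul A (g.1 0 0) (g.1 1 0) with
    ⟨c, hc, hg⟩ | ⟨c, hc, hg⟩
  · exact .inl (mem_iwahori_mul_borelSL2_of_eq_mul hc hg)
  · exact .inr (mem_iwahori_mul_sMat_mul_borelSL2_of_eq_mul hc hg)

theorem stmt_1_general (A : ValuationSubring K) {w : SL2 K} (hw : w = 1 ∨ w = sMat K) :
    Iwahori A * {w} * BorelSL2 K ∪ Iwahori A * {w} * {sMat K} * BorelSL2 K = Set.univ := by
  rcases hw with rfl | rfl
  · rw [Set.singleton_one, mul_one, iwahori_mul_borelSL2_union_eq_univ]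
  · have hss : Iwahori A * {sMat K} * {sMat K} * BorelSL2 K = Iwahori A * BorelSL2 K := by
      rw [mul_assoc (Iwahori A) {sMat K}, Set.singleton_mul_singleton, sMat_mul_sMat, mul_assoc,
        singleton_neg_one_mul_borelSL2]
    rw [hss, Set.union_comm, iwahori_mul_borelSL2_union_eq_univ]

end

/-- Rank-one Bruhat-cell lemma (Lemma 4.1): for any `a ∈ K` and `w ∈ {1, s}`,
`w·s·u₋(a) ∈ I·w·B(K) ∪ I·w·s·B(K)`. -/
theorem stmt_1 {K : Type*} [Field K] (A : ValuationSubring K) (a : K)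
    (w : SL2 K) (hw : w = 1 ∨ w = sMat K) :
    w * sMat K * uLower a ∈
      (Iwahori A * ({w} : Set (SL2 K)) * BorelSL2 K) ∪
        (Iwahori A * ({w} : Set (SL2 K)) * ({sMat K} : Set (SL2 K)) * BorelSL2 K) := by
  rw [stmt_1_general A hw]
  exact Set.mem_univ _
end

section
/- Let F be a totally real number field with ring of integers 𝓞_F, and for each field embedding σ : F → ℝ let n_σ ∈ ℤ. Then the following are equivalent: (i) there exists a subgroup U of the unit group 𝓞_Fˣ of finite index such that ∏_σ σ(u)^{n_σ} = 1 for every u ∈ U (the product over all embeddings of F into ℝ); (ii) the integers n_σ are all equal to one common value N (so the character u ↦ ∏_σ σ(u)^{n_σ} is the N-th power of the norm). -/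
open scoped NumberField

/-!
After passing to absolute values, which only costs a subgroup of finite index, the condition on
the exponents is linear: `∑ w, c w * log (w u) = 0` for every unit `u`. The product formula gives
the solution `c w = mult w`. It is the only one up to scaling: subtract the multiple of it that
makes all the coefficients nonnegative and one of them, at `w₁`, zero. By Dirichlet's unit theorem
there is a unit with `log (w u) < 0` at every `w ≠ w₁`, so the other coefficients vanish too.
-/

theorem exists_finiteIndex_forall_eq_one_iff_forall_abs_eq_one {G R : Type*} [Group G] [Ring R]
    [LinearOrder R] [IsStrictOrderedRing R] (f : G →* R) :
    (∃ U : Subgroup G, U.FiniteIndex ∧ ∀ g ∈ U, f g = 1) ↔ ∀ g, |f g| = 1 := by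
  constructor
  · rintro ⟨U, hU, hfU⟩ g
    obtain ⟨k, hk, -, hgk⟩ := U.exists_pow_mem_of_index_ne_zero hU.index_ne_zero g
    have habs : |f g| ^ k = 1 := by rw [← abs_pow, ← map_pow, hfU _ hgk, abs_one]
    exact (pow_eq_one_iff_of_nonneg (abs_nonneg _) hk.ne').mp habs
  · intro hf
    have hrange : (f.toHomUnits.range : Set Rˣ) ⊆ {1, -1} := by
      rintro _ ⟨g, rfl⟩
      exact (eq_or_eq_neg_of_abs_eq (hf g)).imp Units.ext fun h ↦ Units.ext (by simpa using h)
    have : Finite f.toHomUnits.range := (Set.toFinite {1, -1}).subset hrange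
    exact ⟨f.toHomUnits.ker, Subgroup.finiteIndex_ker _, fun g hg ↦ congrArg Units.val hg⟩

section InfinitePlace

open NumberField InfinitePlace

variable {K : Type*} [Field K] [NumberField K]

theorem eq_zero_of_forall_units_sum_mul_log_eq_zero {a : InfinitePlace K → ℝ} (ha : 0 ≤ a)
    {w₁ : InfinitePlace K} (hw₁ : a w₁ = 0)
    (hsum : ∀ u : (𝓞 K)ˣ, ∑ w, a w * Real.log (w u) = 0) : a = 0 := by
  obtain ⟨u, hu⟩ := Units.dirichletUnitTheorem.exists_unit K w₁
  have hterm : ∀ w, a w * Real.log (w u) ≤ 0 := fun w ↦ by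
    obtain rfl | hw := eq_or_ne w w₁
    · simp [hw₁]
    · exact mul_nonpos_of_nonneg_of_nonpos (ha w) (hu w hw).le
  have hzero := (Fintype.sum_eq_zero_iff_of_nonpos hterm).mp (hsum u)
  funext w
  obtain rfl | hw := eq_or_ne w w₁
  · exact hw₁
  · exact (mul_eq_zero.mp (congrFun hzero w)).resolve_right (hu w hw).ne

theorem forall_units_sum_mul_log_eq_zero_iff {c : InfinitePlace K → ℝ} :
    (∀ u : (𝓞 K)ˣ, ∑ w, c w * Real.log (w u) = 0) ↔ ∃ r : ℝ, ∀ w, c w = r * mult w := by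
  constructor
  · intro hc
    obtain ⟨w₁, hmin⟩ := Finite.exists_min fun w ↦ c w / mult w
    set r : ℝ := c w₁ / mult w₁
    have hnonneg : 0 ≤ fun w ↦ c w - r * mult w := fun w ↦
      sub_nonneg.mpr ((le_div_iff₀ (Nat.cast_pos.mpr mult_pos)).mp (hmin w))
    have hw₁ : c w₁ - r * mult w₁ = 0 := sub_eq_zero.mpr (div_mul_cancel₀ _ mult_coe_ne_zero).symm
    have hsum (u : (𝓞 K)ˣ) : ∑ w, (c w - r * mult w) * Real.log (w u) = 0 := by
      simp only [sub_mul, mul_assoc, Finset.sum_sub_distrib, ← Finset.mul_sum, hc,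
        Units.sum_mult_mul_log, mul_zero, sub_zero]
    exact ⟨r, fun w ↦ sub_eq_zero.mp
      (congrFun (eq_zero_of_forall_units_sum_mul_log_eq_zero hnonneg hw₁ hsum) w)⟩
  · rintro ⟨r, hr⟩ u
    simp only [hr, mul_assoc, ← Finset.mul_sum, Units.sum_mult_mul_log, mul_zero]

end InfinitePlace

section RealEmbeddings

open NumberField InfinitePlace

section Field

variable {F : Type*} [Field F]

/-- The infinite place of `F` induced by a real embedding. Mathlib's places are built from complex
embeddings, whence the composition with `ℝ → ℂ`. -/
noncomputable def realPlace (σ : F →+* ℝ) : InfinitePlace F :=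
  InfinitePlace.mk (Complex.ofRealHom.comp σ)

@[simp]
theorem realPlace_apply (σ : F →+* ℝ) (x : F) : realPlace σ x = |σ x| := by
  simp [realPlace, InfinitePlace.apply]

theorem isReal_realPlace (σ : F →+* ℝ) : (realPlace σ).IsReal :=
  isReal_mk_iff.mpr (RingHom.ext fun x ↦ Complex.conj_ofReal (σ x))

theorem exists_realPlace_eq_iff {w : InfinitePlace F} : (∃ σ, realPlace σ = w) ↔ w.IsReal := by
  refine ⟨fun ⟨σ, hσ⟩ ↦ hσ ▸ isReal_realPlace σ, fun hw ↦ ⟨embedding_of_isReal hw, ?_⟩⟩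
  ext x
  rw [realPlace_apply, ← Real.norm_eq_abs, norm_embedding_of_isReal]

theorem realPlace_injective : Function.Injective (realPlace (F := F)) := by
  intro σ τ h
  have hστ : Complex.ofRealHom.comp σ = Complex.ofRealHom.comp τ := by
    rcases mk_eq_iff.mp h with h | h
    · exact h
    · rwa [ComplexEmbedding.isReal_iff.mp (isReal_mk_iff.mp (isReal_realPlace σ))] at h
  exact RingHom.ext fun x ↦ Complex.ofReal_injective (RingHom.congr_fun hστ x)

/-- Exponents on the real embeddings of `F`, transported to its infinite places and extended by
zero to the complex ones. -/
noncomputable def placeExponent (n : (F →+* ℝ) → ℤ) : InfinitePlace F → ℤ :=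
  Function.extend realPlace n 0

theorem placeExponent_realPlace (n : (F →+* ℝ) → ℤ) (σ : F →+* ℝ) :
    placeExponent n (realPlace σ) = n σ :=
  realPlace_injective.extend_apply n 0 σ

theorem placeExponent_of_isComplex (n : (F →+* ℝ) → ℤ) {w : InfinitePlace F}
    (hw : w.IsComplex) : placeExponent n w = 0 :=
  Function.extend_apply' _ _ _ (exists_realPlace_eq_iff.not.mpr (not_isReal_iff_isComplex.mpr hw))

end Field

variable {F : Type*} [Field F] [NumberField F]

/-- The algebraic character `u ↦ ∏ σ, σ(u) ^ n σ` of the units, over the real embeddings `σ`. -/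
noncomputable def unitCharacter (n : (F →+* ℝ) → ℤ) : (𝓞 F)ˣ →* ℝ where
  toFun u := ∏ σ : F →+* ℝ, σ (algebraMap (𝓞 F) F u) ^ n σ
  map_one' := by simp
  map_mul' u v := by simp [mul_zpow, Finset.prod_mul_distrib]

theorem log_abs_unitCharacter (n : (F →+* ℝ) → ℤ) (u : (𝓞 F)ˣ) :
    Real.log |unitCharacter n u| =
      ∑ w, placeExponent n w * Real.log (w u) := by
  have hne (σ : F →+* ℝ) : σ (algebraMap (𝓞 F) F u) ^ n σ ≠ 0 := zpow_ne_zero _ (by simp)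
  calc Real.log |unitCharacter n u|
      = ∑ σ : F →+* ℝ, n σ * Real.log (realPlace σ u) := by
        rw [Real.log_abs]
        simp [unitCharacter, Real.log_prod fun σ _ ↦ hne σ]
    _ = _ := Fintype.sum_of_injective _ realPlace_injective _ _
        (fun w hw ↦ by
          have hw' : w.IsComplex := not_isReal_iff_isComplex.mp (exists_realPlace_eq_iff.not.mp hw)
          rw [placeExponent_of_isComplex n hw', Int.cast_zero, zero_mul])
        (fun σ ↦ by rw [placeExponent_realPlace])

theorem abs_unitCharacter_eq_one_iff (n : (F →+* ℝ) → ℤ) (u : (𝓞 F)ˣ) :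
    |unitCharacter n u| = 1 ↔ Real.log |unitCharacter n u| = 0 := by
  have hpos : 0 < |unitCharacter n u| :=
    abs_pos.mpr ((Group.isUnit u).map (unitCharacter n)).ne_zero
  exact ⟨fun h ↦ by rw [h, Real.log_one], Real.eq_one_of_pos_of_log_eq_zero hpos⟩

theorem exists_placeExponent_eq_mul_mult_iff (n : (F →+* ℝ) → ℤ) :
    (∃ r : ℝ, ∀ w, placeExponent n w = r * mult w) ↔
      ∃ N : ℤ, (∀ σ, n σ = N) ∧ (IsTotallyReal F ∨ N = 0) := by
  constructor
  · rintro ⟨r, hr⟩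
    have hreal (σ : F →+* ℝ) : (n σ : ℝ) = r := by
      simpa [placeExponent_realPlace, (isReal_realPlace σ).mult_eq_one] using hr (realPlace σ)
    by_cases hF : IsTotallyReal F
    · obtain ⟨σ₀, -⟩ := exists_realPlace_eq_iff.mpr (hF.isReal (Classical.arbitrary _))
      exact ⟨n σ₀, fun σ ↦ Int.cast_injective ((hreal σ).trans (hreal σ₀).symm), .inl hF⟩
    · obtain ⟨w, hw⟩ : ∃ w : InfinitePlace F, w.IsComplex := by
        simpa [isTotallyReal_iff] using hF
      have hr₀ : r = 0 := by
        simpa [placeExponent_of_isComplex n hw, mult_ne_zero] using hr w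
      exact ⟨0, fun σ ↦ Int.cast_eq_zero.mp ((hreal σ).trans hr₀), .inr rfl⟩
  · rintro ⟨N, hn, hN⟩
    refine ⟨N, fun w ↦ ?_⟩
    rcases isReal_or_isComplex w with hw | hw
    · obtain ⟨σ, rfl⟩ := exists_realPlace_eq_iff.mpr hw
      rw [placeExponent_realPlace, hn, hw.mult_eq_one, Nat.cast_one, mul_one]
    · have hN₀ : N = 0 := hN.resolve_left fun h ↦ not_isReal_iff_isComplex.mpr hw (h.isReal w)
      rw [placeExponent_of_isComplex n hw, hN₀, Int.cast_zero, zero_mul]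

end RealEmbeddings

theorem stmt_7_general (F : Type*) [Field F] [NumberField F] (n : (F →+* ℝ) → ℤ) :
    (∃ U : Subgroup (𝓞 F)ˣ, U.FiniteIndex ∧
        ∀ u ∈ U, ∏ σ : F →+* ℝ, (σ (algebraMap (𝓞 F) F ((u : (𝓞 F)ˣ) : 𝓞 F))) ^ (n σ) = 1) ↔
      ∃ N : ℤ, (∀ σ : F →+* ℝ, n σ = N) ∧ (NumberField.IsTotallyReal F ∨ N = 0) := by
  refine (exists_finiteIndex_forall_eq_one_iff_forall_abs_eq_one (unitCharacter n)).trans ?_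
  simp_rw [abs_unitCharacter_eq_one_iff, log_abs_unitCharacter]
  rw [forall_units_sum_mul_log_eq_zero_iff, exists_placeExponent_eq_mul_mult_iff]

/-- An algebraic character of the units of a totally real field is trivial on a
finite-index subgroup of the units if and only if it is a power of the norm,
i.e. all the exponents `n_σ` are equal (remark inside Lemma 4.11(ii)). -/
theorem stmt_7 (F : Type*) [Field F] [NumberField F]
    (htotallyReal : ∀ φ : F →+* ℂ, NumberField.ComplexEmbedding.IsReal φ)
    (n : (F →+* ℝ) → ℤ) :
    (∃ U : Subgroup (𝓞 F)ˣ, U.FiniteIndex ∧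
        ∀ u ∈ U, ∏ σ : F →+* ℝ, (σ (algebraMap (𝓞 F) F ((u : (𝓞 F)ˣ) : 𝓞 F))) ^ (n σ) = 1) ↔
      ∃ N : ℤ, ∀ σ : F →+* ℝ, n σ = N := by
  have : NumberField.IsTotallyReal F :=
    ⟨fun w ↦ NumberField.InfinitePlace.isReal_iff.mpr (htotallyReal w.embedding)⟩
  simpa [this] using stmt_7_general F n
end

section
/- Let p be a prime and r ≥ 1. Let g ∈ M₄(ℤ_p) satisfy ᵗg·J·g = J, and write g in 2×2 blocks as g = (A, B; C, D). If every entry of C lies in p^r·ℤ_p, then there exist a unique symmetric matrix X ∈ M₂(ℤ_p) with all entries in p^r·ℤ_p and unique A′, B′, D′ ∈ M₂(ℤ_p) such that q = (A′, B′; 0, D′) satisfies ᵗq·J·q = J and g = (1₂, 0; X, 1₂) · q. -/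
open Matrix

/-- The standard symplectic matrix `J = (0, 1₂; −1₂, 0)` in `M₄(R)`. -/
def J4 (R : Type*) [CommRing R] : Matrix (Fin 4) (Fin 4) R :=
  !![0, 0, 1, 0;
     0, 0, 0, 1;
     -1, 0, 0, 0;
     0, -1, 0, 0]

/-- The `4×4` matrix with the `2×2` blocks `A, B, C, D`. -/
def blocks4 {R : Type*} [CommRing R] (A B C D : Matrix (Fin 2) (Fin 2) R) :
    Matrix (Fin 4) (Fin 4) R :=
  !![A 0 0, A 0 1, B 0 0, B 0 1;
     A 1 0, A 1 1, B 1 0, B 1 1;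
     C 0 0, C 0 1, D 0 0, D 0 1;
     C 1 0, C 1 1, D 1 0, D 1 1]

/-!
Modulo an ideal `I` contained in the Jacobson radical, a matrix `g = (A, B; C, D)` with `C ≡ 0` is
block upper triangular, so invertibility of `g` forces that of `A` modulo `I`, hence that of `A`.
Comparing blocks in `g = (1, 0; X, 1) · (A', B'; 0, D')` then leaves only `X = C A⁻¹`, `A' = A`,
`B' = B` and `D' = D - C A⁻¹ B`. If `g` is symplectic, `Aᵀ C = Cᵀ A` says that `X` is symmetric;
then `(1, 0; X, 1)` is symplectic, and therefore so is the other factor.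
-/

section LowerUpperFactorization

variable {m n R : Type*} [Fintype m] [CommRing R]

theorem mul_apply_mem_of_left {k : Type*} {I : Ideal R} {C : Matrix n m R}
    (hC : ∀ i j, C i j ∈ I) (M : Matrix m k R) (i : n) (j : k) : (C * M) i j ∈ I :=
  I.sum_mem fun a _ => I.mul_mem_right _ (hC i a)

variable [Fintype n] [DecidableEq m] [DecidableEq n]

theorem isUnit_topLeft_of_isUnit_fromBlocks_of_le_jacobson_bot {I : Ideal R}
    (hI : I ≤ Ideal.jacobson ⊥) {A : Matrix m m R} {B : Matrix m n R} {C : Matrix n m R}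
    {D : Matrix n n R} (hg : IsUnit (fromBlocks A B C D)) (hC : ∀ i j, C i j ∈ I) : IsUnit A := by
  let π := Ideal.Quotient.mk I
  have : IsLocalHom π := isLocalHom_of_le_jacobson_bot I hI
  have hCπ : C.map π = 0 := by
    ext i j
    exact Ideal.Quotient.eq_zero_iff_mem.2 (hC i j)
  have hgπ : IsUnit (fromBlocks (A.map π) (B.map π) 0 (D.map π)) := by
    simpa only [RingHom.mapMatrix_apply, fromBlocks_map, hCπ] using hg.map π.mapMatrix
  have hAπ : IsUnit (π A.det) := by
    rw [RingHom.map_det, ← isUnit_iff_isUnit_det]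
    exact (isUnit_fromBlocks_zero₂₁.1 hgπ).1
  exact (isUnit_iff_isUnit_det A).2 (isUnit_of_map_unit π _ hAπ)

theorem fromBlocks_eq_lower_mul_upper_iff {A A' : Matrix m m R} {B B' : Matrix m n R}
    {C X : Matrix n m R} {D D' : Matrix n n R} (hA : IsUnit A) :
    fromBlocks A B C D = fromBlocks 1 0 X 1 * fromBlocks A' B' 0 D' ↔
      X = C * A⁻¹ ∧ A' = A ∧ B' = B ∧ D' = D - C * A⁻¹ * B := by
  have hdet := (isUnit_iff_isUnit_det A).1 hA
  simp only [fromBlocks_multiply, fromBlocks_inj, Matrix.one_mul, Matrix.zero_mul, Matrix.mul_zero,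
    add_zero]
  constructor
  · rintro ⟨rfl, rfl, rfl, rfl⟩
    simp only [mul_nonsing_inv_cancel_right _ _ hdet, add_sub_cancel_left, and_self]
  · rintro ⟨rfl, rfl, rfl, rfl⟩
    simp only [nonsing_inv_mul_cancel_right _ _ hdet, add_sub_cancel, and_self]

end LowerUpperFactorization

section Symplectic

variable {l R : Type*} [Fintype l] [DecidableEq l] [CommRing R]

theorem isSymm_mul_inv_of_transpose_mul_eq {A C : Matrix l l R} (hA : IsUnit A)
    (hAC : Aᵀ * C = Cᵀ * A) : (C * A⁻¹).IsSymm := by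
  have hdet := (isUnit_iff_isUnit_det A).1 hA
  have hdetT : IsUnit Aᵀ.det := by rwa [det_transpose]
  calc (C * A⁻¹)ᵀ = Aᵀ⁻¹ * Cᵀ := by rw [transpose_mul, transpose_nonsing_inv]
    _ = Aᵀ⁻¹ * (Cᵀ * A * A⁻¹) := by rw [mul_nonsing_inv_cancel_right _ _ hdet]
    _ = Aᵀ⁻¹ * (Aᵀ * (C * A⁻¹)) := by rw [← hAC, Matrix.mul_assoc]
    _ = C * A⁻¹ := nonsing_inv_mul_cancel_left _ _ hdetT

theorem fromBlocks_one_zero_one_mem_symplecticGroup_iff {X : Matrix l l R} :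
    fromBlocks 1 0 X 1 ∈ symplecticGroup l R ↔ X.IsSymm := by
  simp [SymplecticGroup.fromBlocks_mem_iff, IsSymm, eq_comm]

theorem mem_symplecticGroup_of_lower_mul_mem {X : Matrix l l R} {q : Matrix (l ⊕ l) (l ⊕ l) R}
    (hX : X.IsSymm) (h : fromBlocks 1 0 X 1 * q ∈ symplecticGroup l R) :
    q ∈ symplecticGroup l R := by
  have hinv : fromBlocks 1 0 (-X) 1 * fromBlocks 1 0 X 1 = (1 : Matrix (l ⊕ l) (l ⊕ l) R) := by
    simp [fromBlocks_multiply]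
  rw [← Matrix.one_mul q, ← hinv, Matrix.mul_assoc]
  exact mul_mem (fromBlocks_one_zero_one_mem_symplecticGroup_iff.2 hX.neg) h

theorem stmt_11_general {I : Ideal R} (hI : I ≤ Ideal.jacobson ⊥)
    {g : Matrix (l ⊕ l) (l ⊕ l) R} (hg : g ∈ symplecticGroup l R)
    (hC : ∀ i j, g.toBlocks₂₁ i j ∈ I) :
    ∃! Xq : Matrix l l R × (Matrix l l R × Matrix l l R × Matrix l l R),
      Xq.1.IsSymm ∧ (∀ i j, Xq.1 i j ∈ I) ∧
      fromBlocks Xq.2.1 Xq.2.2.1 0 Xq.2.2.2 ∈ symplecticGroup l R ∧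
      g = fromBlocks 1 0 Xq.1 1 * fromBlocks Xq.2.1 Xq.2.2.1 0 Xq.2.2.2 := by
  obtain ⟨A, B, C, D, rfl⟩ : ∃ A B C D, g = fromBlocks A B C D :=
    ⟨_, _, _, _, (fromBlocks_toBlocks g).symm⟩
  rw [toBlocks_fromBlocks₂₁] at hC
  have hA : IsUnit A := isUnit_topLeft_of_isUnit_fromBlocks_of_le_jacobson_bot hI
    ((isUnit_iff_isUnit_det _).2 (SymplecticGroup.symplectic_det hg)) hC
  have hX : (C * A⁻¹).IsSymm :=
    isSymm_mul_inv_of_transpose_mul_eq hA (SymplecticGroup.fromBlocks_mem_iff.1 hg).1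
  have hfactor : fromBlocks A B C D =
      fromBlocks 1 0 (C * A⁻¹) 1 * fromBlocks A B 0 (D - C * A⁻¹ * B) :=
    (fromBlocks_eq_lower_mul_upper_iff hA).2 ⟨rfl, rfl, rfl, rfl⟩
  refine ⟨(C * A⁻¹, A, B, D - C * A⁻¹ * B), ⟨hX, mul_apply_mem_of_left hC _,
    mem_symplecticGroup_of_lower_mul_mem hX (hfactor ▸ hg), hfactor⟩, ?_⟩
  rintro ⟨X, A', B', D'⟩ ⟨-, -, -, h⟩
  simpa only [Prod.mk.injEq] using (fromBlocks_eq_lower_mul_upper_iff hA).1 h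

end Symplectic

section FourByFour

variable {R : Type*} [CommRing R]

/-- The identification of `4 × 4` matrices with `2 × 2` block matrices, under which `blocks4`
becomes `Matrix.fromBlocks`. -/
def blockEquiv (R : Type*) [CommRing R] :
    Matrix (Fin 4) (Fin 4) R ≃ₐ[R] Matrix (Fin 2 ⊕ Fin 2) (Fin 2 ⊕ Fin 2) R :=
  reindexAlgEquiv R R (finSumFinEquiv (m := 2) (n := 2)).symm

theorem blockEquiv_blocks4 (A B C D : Matrix (Fin 2) (Fin 2) R) :
    blockEquiv R (blocks4 A B C D) = fromBlocks A B C D := by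
  ext (i | i) (j | j) <;> fin_cases i <;> fin_cases j <;> rfl

theorem blockEquiv_transpose (g : Matrix (Fin 4) (Fin 4) R) :
    blockEquiv R gᵀ = (blockEquiv R g)ᵀ := rfl

theorem blockEquiv_J4 : blockEquiv R (J4 R) = -J (Fin 2) R := by
  have hJ4 : J4 R = blocks4 0 1 (-1) 0 := by simp [J4, blocks4]
  rw [hJ4, blockEquiv_blocks4, J, fromBlocks_neg, neg_zero, neg_neg]

theorem blockEquiv_mem_symplecticGroup_iff {g : Matrix (Fin 4) (Fin 4) R} :
    blockEquiv R g ∈ symplecticGroup (Fin 2) R ↔ gᵀ * J4 R * g = J4 R := by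
  rw [← (blockEquiv R).injective.eq_iff]
  simp only [map_mul, blockEquiv_transpose, blockEquiv_J4, Matrix.mul_neg, Matrix.neg_mul,
    neg_inj, SymplecticGroup.mem_iff']

theorem blockEquiv_toBlocks₂₁_apply_mem {s : Set R} {g : Matrix (Fin 4) (Fin 4) R}
    (h : ∀ i j : Fin 4, 2 ≤ (i : ℕ) → (j : ℕ) < 2 → g i j ∈ s) (i j : Fin 2) :
    (blockEquiv R g).toBlocks₂₁ i j ∈ s :=
  h (Fin.natAdd 2 i) (Fin.castAdd 2 j) (Nat.le_add_right 2 i) j.isLt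

end FourByFour

theorem padicInt_span_p_pow_le_jacobson_bot (p : ℕ) [Fact p.Prime] {r : ℕ} (hr : r ≠ 0) :
    Ideal.span {(p : ℤ_[p]) ^ r} ≤ Ideal.jacobson ⊥ := by
  rw [IsLocalRing.jacobson_eq_maximalIdeal ⊥ bot_ne_top, PadicInt.maximalIdeal_eq_span_p,
    Ideal.span_singleton_le_span_singleton]
  exact dvd_pow_self _ hr

/-- Parahoric (Iwahori) factorization for the Siegel parabolic
(`I′_r = Q′⁻(p^rℤ_p)·Q′(ℤ_p)`, Section 2.1): a symplectic `g ∈ Sp₄(ℤ_p)` whose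
lower-left `2×2` block `C` has entries in `p^r·ℤ_p` factors uniquely as
`g = (1,0;X,1)·q` with `X` symmetric with entries in `p^r·ℤ_p` and
`q = (A′,B′;0,D′)` symplectic block upper-triangular. -/
theorem stmt_11 (p : ℕ) [Fact p.Prime] (r : ℕ) (hr : 1 ≤ r)
    (g : Matrix (Fin 4) (Fin 4) ℤ_[p])
    (hg : g.transpose * J4 ℤ_[p] * g = J4 ℤ_[p])
    (hC : ∀ i j : Fin 4, 2 ≤ (i : ℕ) → (j : ℕ) < 2 → (p : ℤ_[p]) ^ r ∣ g i j) :
    ∃! Xq : Matrix (Fin 2) (Fin 2) ℤ_[p] ×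
        (Matrix (Fin 2) (Fin 2) ℤ_[p] × Matrix (Fin 2) (Fin 2) ℤ_[p] ×
          Matrix (Fin 2) (Fin 2) ℤ_[p]),
      Xq.1.transpose = Xq.1 ∧
      (∀ i j, (p : ℤ_[p]) ^ r ∣ Xq.1 i j) ∧
      (blocks4 Xq.2.1 Xq.2.2.1 0 Xq.2.2.2).transpose * J4 ℤ_[p] *
          blocks4 Xq.2.1 Xq.2.2.1 0 Xq.2.2.2 = J4 ℤ_[p] ∧
      g = blocks4 1 0 Xq.1 1 * blocks4 Xq.2.1 Xq.2.2.1 0 Xq.2.2.2 := by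
  simp only [← Ideal.mem_span_singleton, ← blockEquiv_mem_symplecticGroup_iff] at hC hg ⊢
  simpa only [blockEquiv_blocks4, IsSymm, map_mul,
    ← (blockEquiv ℤ_[p]).injective.eq_iff (a := g)] using
    stmt_11_general (padicInt_span_p_pow_le_jacobson_bot p (Nat.one_le_iff_ne_zero.1 hr)) hg
      (blockEquiv_toBlocks₂₁_apply_mem hC)
end

section
/- Let p be a prime and r ≥ 1. Let g ∈ M₄(ℤ_p) satisfy ᵗg·J·g = J, and suppose the entries of g at the five positions (2,1),(3,1),(4,1),(3,2),(3,4) all lie in p^r·ℤ_p. Then there exist unique u, q ∈ M₄(ℤ_p), both satisfying ᵗu·J·u = J and ᵗq·J·q = J, with g = u·q, where: u has all diagonal entries equal to 1, its entries at the positions (2,1),(3,1),(4,1),(3,2),(3,4) lie in p^r·ℤ_p, and all its other off-diagonal entries vanish; and q vanishes at the positions (2,1),(3,1),(4,1),(3,2),(3,4). -/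
open Matrix

/-- The five sub-Klingen matrix positions `(2,1),(3,1),(4,1),(3,2),(3,4)`
(written with 0-based indices). -/
def subKlingenPos : Set (Fin 4 × Fin 4) :=
  {(1, 0), (2, 0), (3, 0), (2, 1), (2, 3)}

/-! The Klingen parabolic is the stabilizer in `Sp₄` of the line spanned by `e₀`, and the opposite
unipotent radical acts simply transitively on the lines whose first coordinate is a unit. So
`g = u * q` forces the first column of `u` to be that of `g` divided by `g 0 0`, and the symplectic
relations determine the rest of `u`. Conversely, with this `u`, the matrix `u⁻¹ * g` is symplectic
and fixes the line of `e₀`. The entry `g 0 0` is a unit because the pairing of columns `0` and `2`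
of `g` equals `1`, while the other entries of column `0` lie in the Jacobson radical. -/

theorem mul_apply_of_column_eq_zero {m n R : Type*} [Fintype n] [NonUnitalNonAssocSemiring R]
    {q : Matrix n n R} {j : n} (hq : ∀ i ≠ j, q i j = 0) (u : Matrix m n R) (i : m) :
    (u * q) i j = u i j * q j j := by
  rw [mul_apply, Finset.sum_eq_single j (fun k _ hk => by rw [hq k hk, mul_zero]) (by simp)]

section CommRing

variable {R : Type*} [CommRing R]

variable (R) in
/-- The symplectic matrices `Sp₄(R)`, as a submonoid of `M₄(R)` rather than as a group:
its elements are automatically invertible because `J4 R` is. -/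
def sp4 : Submonoid (Matrix (Fin 4) (Fin 4) R) where
  carrier := {g | gᵀ * J4 R * g = J4 R}
  one_mem' := by simp
  mul_mem' {g h} hg hh := by
    calc (g * h)ᵀ * J4 R * (g * h) = hᵀ * (gᵀ * J4 R * g) * h := by
          simp only [transpose_mul, Matrix.mul_assoc]
      _ = J4 R := by rw [hg, hh]

theorem mem_sp4 {g : Matrix (Fin 4) (Fin 4) R} : g ∈ sp4 R ↔ gᵀ * J4 R * g = J4 R :=
  Iff.rfl

theorem transpose_mul_J4_mul_apply (g : Matrix (Fin 4) (Fin 4) R) (i j : Fin 4) :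
    (gᵀ * J4 R * g) i j =
      g 0 i * g 2 j + g 1 i * g 3 j - g 2 i * g 0 j - g 3 i * g 1 j := by
  simp only [J4, mul_apply, transpose_apply, of_apply, cons_val', cons_val_fin_one,
    Fin.sum_univ_four, cons_val_zero, cons_val_one, cons_val, mul_zero, add_zero, mul_neg, mul_one,
    zero_add, neg_mul]
  ring

theorem column_pairing_of_mem_sp4 {g : Matrix (Fin 4) (Fin 4) R} (hg : g ∈ sp4 R) (i j : Fin 4) :
    g 0 i * g 2 j + g 1 i * g 3 j - g 2 i * g 0 j - g 3 i * g 1 j = J4 R i j := by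
  rw [← transpose_mul_J4_mul_apply, mem_sp4.1 hg]

theorem isUnit_apply_zero_zero_of_mem_sp4 {g : Matrix (Fin 4) (Fin 4) R} (hg : g ∈ sp4 R)
    (hcol : ∀ i ≠ 0, g i 0 ∈ Ideal.jacobson (⊥ : Ideal R)) : IsUnit (g 0 0) := by
  have pairing : g 0 0 * g 2 2 + g 1 0 * g 3 2 - g 2 0 * g 0 2 - g 3 0 * g 1 2 = 1 := by
    simpa [J4] using column_pairing_of_mem_sp4 hg 0 2
  have error_mem : g 2 0 * g 0 2 + g 3 0 * g 1 2 - g 1 0 * g 3 2 ∈ Ideal.jacobson (⊥ : Ideal R) :=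
    sub_mem (add_mem (Ideal.mul_mem_right _ _ (hcol 2 (by decide)))
      (Ideal.mul_mem_right _ _ (hcol 3 (by decide)))) (Ideal.mul_mem_right _ _ (hcol 1 (by decide)))
  have isUnit_error_add_one := Ideal.mem_jacobson_bot.1 error_mem 1
  refine isUnit_of_mul_isUnit_left (y := g 2 2) ?_
  convert isUnit_error_add_one using 1
  linear_combination pairing

theorem forall_mem_subKlingenPos {P : Fin 4 × Fin 4 → Prop} :
    (∀ s ∈ subKlingenPos, P s) ↔ P (1, 0) ∧ P (2, 0) ∧ P (3, 0) ∧ P (2, 1) ∧ P (2, 3) := by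
  simp [subKlingenPos]

theorem mem_subKlingenPos_of_ne_zero {i : Fin 4} (hi : i ≠ 0) : (i, 0) ∈ subKlingenPos := by
  fin_cases i <;> simp [subKlingenPos] at hi ⊢

theorem subKlingen_eq_zero_of_column_eq_zero {q : Matrix (Fin 4) (Fin 4) R} (hq : q ∈ sp4 R)
    (hunit : IsUnit (q 0 0)) (hcol : ∀ i ≠ 0, q i 0 = 0) :
    ∀ s ∈ subKlingenPos, q s.1 s.2 = 0 := by
  have h1 := hcol 1 (by decide)
  have h2 := hcol 2 (by decide)
  have h3 := hcol 3 (by decide)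
  have pairing01 : q 0 0 * q 2 1 = 0 := by
    simpa [J4, h1, h2, h3] using column_pairing_of_mem_sp4 hq 0 1
  have pairing03 : q 0 0 * q 2 3 = 0 := by
    simpa [J4, h1, h2, h3] using column_pairing_of_mem_sp4 hq 0 3
  exact forall_mem_subKlingenPos.2
    ⟨h1, h2, h3, hunit.mul_right_eq_zero.1 pairing01, hunit.mul_right_eq_zero.1 pairing03⟩

/-- The element of the opposite unipotent radical of the Klingen parabolic with first column
`(1, v 1, v 2, v 3)`. The coordinate `v 0` is ignored, so that columns of matrices can serve as
parameters. -/
def oppKlingen (v : Fin 4 → R) : Matrix (Fin 4) (Fin 4) R :=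
  !![1, 0, 0, 0;
     v 1, 1, 0, 0;
     v 2, v 3, 1, -v 1;
     v 3, 0, 0, 1]

theorem oppKlingen_mem_sp4 (v : Fin 4 → R) : oppKlingen v ∈ sp4 R := by
  rw [mem_sp4]
  ext i j
  rw [transpose_mul_J4_mul_apply]
  fin_cases i <;> fin_cases j <;> simp [oppKlingen, J4, mul_comm]

theorem oppKlingen_mul_oppKlingen_neg (v : Fin 4 → R) : oppKlingen v * oppKlingen (-v) = 1 := by
  ext i j
  fin_cases i <;> fin_cases j <;> simp [oppKlingen, mul_apply, Fin.sum_univ_four, mul_comm]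

theorem oppKlingen_neg_mul_oppKlingen (v : Fin 4 → R) : oppKlingen (-v) * oppKlingen v = 1 :=
  mul_eq_one_comm.1 (oppKlingen_mul_oppKlingen_neg v)

theorem oppKlingen_apply_self (v : Fin 4 → R) (i : Fin 4) : oppKlingen v i i = 1 := by
  fin_cases i <;> rfl

theorem oppKlingen_apply_mem {v : Fin 4 → R} {I : Ideal R} (hv : ∀ i ≠ 0, v i ∈ I) :
    ∀ s ∈ subKlingenPos, oppKlingen v s.1 s.2 ∈ I := by
  have h1 := hv 1 (by decide)
  have h3 := hv 3 (by decide)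
  exact forall_mem_subKlingenPos.2 ⟨h1, hv 2 (by decide), h3, h3, I.neg_mem h1⟩

theorem oppKlingen_apply_eq_zero (v : Fin 4 → R) (i j : Fin 4) (hij : i ≠ j)
    (hs : (i, j) ∉ subKlingenPos) : oppKlingen v i j = 0 := by
  fin_cases i <;> fin_cases j <;> simp [oppKlingen, subKlingenPos] at hij hs ⊢

theorem eq_oppKlingen_column_zero {u : Matrix (Fin 4) (Fin 4) R} (hu : u ∈ sp4 R)
    (hdiag : ∀ i, u i i = 1) (hoff : ∀ i j, i ≠ j → (i, j) ∉ subKlingenPos → u i j = 0) :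
    u = oppKlingen (u.col 0) := by
  have h01 : u 0 1 = 0 := hoff 0 1 (by decide) (by simp [subKlingenPos])
  have h02 : u 0 2 = 0 := hoff 0 2 (by decide) (by simp [subKlingenPos])
  have h03 : u 0 3 = 0 := hoff 0 3 (by decide) (by simp [subKlingenPos])
  have h12 : u 1 2 = 0 := hoff 1 2 (by decide) (by simp [subKlingenPos])
  have h13 : u 1 3 = 0 := hoff 1 3 (by decide) (by simp [subKlingenPos])
  have h31 : u 3 1 = 0 := hoff 3 1 (by decide) (by simp [subKlingenPos])
  have h32 : u 3 2 = 0 := hoff 3 2 (by decide) (by simp [subKlingenPos])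
  have pairing01 : u 2 1 - u 3 0 = 0 := by
    simpa [J4, hdiag, h01, h31] using column_pairing_of_mem_sp4 hu 0 1
  have pairing03 : u 2 3 + u 1 0 = 0 := by
    simpa [J4, hdiag, h03, h13] using column_pairing_of_mem_sp4 hu 0 3
  have h21 : u 2 1 = u 3 0 := sub_eq_zero.1 pairing01
  have h23 : u 2 3 = -u 1 0 := eq_neg_of_add_eq_zero_left pairing03
  ext i j
  fin_cases i <;> fin_cases j <;> simp [oppKlingen, *]

theorem oppKlingen_neg_mul_column_zero {v : Fin 4 → R} {g : Matrix (Fin 4) (Fin 4) R}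
    (hv : ∀ i, g i 0 = v i * g 0 0) :
    (oppKlingen (-v) * g).col 0 = Pi.single 0 (g 0 0) := by
  have column_eq : g.col 0 = oppKlingen v *ᵥ Pi.single 0 (g 0 0) := by
    ext i
    fin_cases i <;> simp [oppKlingen, hv 1, hv 2, hv 3, mul_comm]
  calc (oppKlingen (-v) * g).col 0 = oppKlingen (-v) *ᵥ g.col 0 := rfl
    _ = Pi.single 0 (g 0 0) := by
      rw [column_eq, mulVec_mulVec, oppKlingen_neg_mul_oppKlingen, one_mulVec]

theorem eq_oppKlingen_of_mul_column_eq {u q : Matrix (Fin 4) (Fin 4) R} {v : Fin 4 → R}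
    (hu : u ∈ sp4 R) (hdiag : ∀ i, u i i = 1)
    (hoff : ∀ i j, i ≠ j → (i, j) ∉ subKlingenPos → u i j = 0) (hq : ∀ i ≠ 0, q i 0 = 0)
    (hunit : IsUnit ((u * q) 0 0)) (hv : ∀ i, (u * q) i 0 = v i * (u * q) 0 0) :
    u = oppKlingen v := by
  have corner_eq : (u * q) 0 0 = q 0 0 := by rw [mul_apply_of_column_eq_zero hq, hdiag, one_mul]
  have column_eq : u.col 0 = v := by
    ext i
    have scaled_eq : u i 0 * q 0 0 = v i * q 0 0 := by
      rw [← mul_apply_of_column_eq_zero hq, hv, corner_eq]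
    exact (corner_eq ▸ hunit).mul_left_injective scaled_eq
  exact column_eq ▸ eq_oppKlingen_column_zero hu hdiag hoff

theorem stmt_13_general {g : Matrix (Fin 4) (Fin 4) R} (hg : g ∈ sp4 R) (hunit : IsUnit (g 0 0))
    {I : Ideal R} (hcol : ∀ i ≠ 0, g i 0 ∈ I) :
    ∃! uq : Matrix (Fin 4) (Fin 4) R × Matrix (Fin 4) (Fin 4) R,
      uq.1 ∈ sp4 R ∧ uq.2 ∈ sp4 R ∧ g = uq.1 * uq.2 ∧
      (∀ i : Fin 4, uq.1 i i = 1) ∧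
      (∀ s ∈ subKlingenPos, uq.1 s.1 s.2 ∈ I) ∧
      (∀ i j : Fin 4, i ≠ j → (i, j) ∉ subKlingenPos → uq.1 i j = 0) ∧
      ∀ s ∈ subKlingenPos, uq.2 s.1 s.2 = 0 := by
  obtain ⟨v, v_mem, column_eq⟩ :
      ∃ v : Fin 4 → R, (∀ i ≠ 0, v i ∈ I) ∧ ∀ i, g i 0 = v i * g 0 0 := by
    obtain ⟨b, hb⟩ := hunit.exists_left_inv
    exact ⟨fun i => g i 0 * b, fun i hi => I.mul_mem_right b (hcol i hi),
      fun i => by rw [mul_assoc, hb, mul_one]⟩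
  have q_mem : oppKlingen (-v) * g ∈ sp4 R := mul_mem (oppKlingen_mem_sp4 _) hg
  have q_column (i : Fin 4) :
      (oppKlingen (-v) * g) i 0 = (Pi.single 0 (g 0 0) : Fin 4 → R) i :=
    congrFun (oppKlingen_neg_mul_column_zero column_eq) i
  have q_klingen := subKlingen_eq_zero_of_column_eq_zero q_mem
    (by rwa [q_column, Pi.single_eq_same]) fun i hi => by rw [q_column, Pi.single_eq_of_ne hi]
  refine ⟨(oppKlingen v, oppKlingen (-v) * g), ⟨oppKlingen_mem_sp4 v, q_mem, ?_,
    oppKlingen_apply_self v, oppKlingen_apply_mem v_mem, oppKlingen_apply_eq_zero v,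
    q_klingen⟩, ?_⟩
  · rw [← Matrix.mul_assoc, oppKlingen_mul_oppKlingen_neg, Matrix.one_mul]
  · rintro ⟨u, q⟩ ⟨hu, -, rfl, hdiag, -, hoff, hq⟩
    have u_eq : u = oppKlingen v := eq_oppKlingen_of_mul_column_eq hu hdiag hoff
      (fun i hi => hq (i, 0) (mem_subKlingenPos_of_ne_zero hi)) hunit column_eq
    have q_eq : q = oppKlingen (-v) * (u * q) := by
      rw [u_eq, ← Matrix.mul_assoc, oppKlingen_neg_mul_oppKlingen, Matrix.one_mul]
    exact Prod.ext u_eq q_eq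

end CommRing

theorem span_p_pow_le_jacobson_bot (p : ℕ) [Fact p.Prime] {r : ℕ} (hr : 1 ≤ r) :
    Ideal.span {(p : ℤ_[p]) ^ r} ≤ Ideal.jacobson ⊥ := by
  rw [IsLocalRing.jacobson_eq_maximalIdeal ⊥ bot_ne_top, PadicInt.maximalIdeal_eq_span_p,
    Ideal.span_singleton_le_span_singleton]
  exact dvd_pow_self _ (Nat.one_le_iff_ne_zero.1 hr)

/-- Parahoric factorization for the Klingen parabolic
(`I′_r = Q′⁻(p^rℤ_p)·Q′(ℤ_p)`, Section 2.1): a symplectic `g ∈ Sp₄(ℤ_p)` whose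
entries at the five sub-Klingen positions lie in `p^r·ℤ_p` factors uniquely as
`g = u·q` with `u` in the opposite unipotent radical (diagonal `1`, supported
off-diagonally only at the five positions, with those entries in `p^r·ℤ_p`)
and `q` symplectic in the standard Klingen parabolic. -/
theorem stmt_13 (p : ℕ) [Fact p.Prime] (r : ℕ) (hr : 1 ≤ r)
    (g : Matrix (Fin 4) (Fin 4) ℤ_[p])
    (hg : g.transpose * J4 ℤ_[p] * g = J4 ℤ_[p])
    (hK : ∀ q ∈ subKlingenPos, (p : ℤ_[p]) ^ r ∣ g q.1 q.2) :
    ∃! uq : Matrix (Fin 4) (Fin 4) ℤ_[p] × Matrix (Fin 4) (Fin 4) ℤ_[p],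
      uq.1.transpose * J4 ℤ_[p] * uq.1 = J4 ℤ_[p] ∧
      uq.2.transpose * J4 ℤ_[p] * uq.2 = J4 ℤ_[p] ∧
      g = uq.1 * uq.2 ∧
      (∀ i : Fin 4, uq.1 i i = 1) ∧
      (∀ q ∈ subKlingenPos, (p : ℤ_[p]) ^ r ∣ uq.1 q.1 q.2) ∧
      (∀ i j : Fin 4, i ≠ j → (i, j) ∉ subKlingenPos → uq.1 i j = 0) ∧
      ∀ q ∈ subKlingenPos, uq.2 q.1 q.2 = 0 := by
  have hcol (i : Fin 4) (hi : i ≠ 0) : g i 0 ∈ Ideal.span {(p : ℤ_[p]) ^ r} :=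
    Ideal.mem_span_singleton.2 (hK (i, 0) (mem_subKlingenPos_of_ne_zero hi))
  have hunit := isUnit_apply_zero_zero_of_mem_sp4 hg fun i hi =>
    span_p_pow_le_jacobson_bot p hr (hcol i hi)
  simpa only [mem_sp4, Ideal.mem_span_singleton] using stmt_13_general hg hunit hcol
end

section
/- Let p be a prime. Every g ∈ M₄(ℚ_p) with ᵗg·J·g = J factors as g = k·b, where k ∈ M₄(ℤ_p) with ᵗk·J·k = J, and b ∈ M₄(ℚ_p) with ᵗb·J·b = J and b vanishing at the six sub-Borel positions. That is, Sp₄(ℚ_p) = Sp₄(ℤ_p)·B(ℚ_p), where B is the standard Borel subgroup. -/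
open Matrix

/-- The six sub-Borel matrix positions `(2,1),(3,1),(3,2),(3,4),(4,1),(4,2)`
(written with 0-based indices). -/
def subBorelPos : Set (Fin 4 × Fin 4) :=
  {(1, 0), (2, 0), (2, 1), (2, 3), (3, 0), (3, 1)}

/-!
Over a Bézout domain `O` with fraction field `K`, a vector of `K²` is a scalar multiple of a
unimodular vector of `O²`, so some matrix of `SL₂(O)` kills its second coordinate. Given
`g ∈ Sp₄(K)` and the symplectic basis `e₁, e₂, f₁, f₂`, apply this to the first column of `g` in
each of the two hyperbolic planes `⟨eᵢ, fᵢ⟩`, and then in the Lagrangian `⟨e₁, e₂⟩`, whose `SL₂(O)`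
acts through the Siegel Levi. The first column becomes a multiple of `e₁`; since `g` preserves the
form, the row of `f₁` then vanishes off its diagonal entry. One last `SL₂(O)` acting on `⟨e₂, f₂⟩`
clears the remaining entry.
-/

open Sum
open scoped MatrixGroups

section Bezout

variable (O : Type*) {K : Type*} [CommRing O] [IsBezout O] [Field K] [Algebra O K]
  [IsFractionRing O K]

theorem exists_isCoprime_eq_algebraMap_mul (x y : K) :
    ∃ (a b : O) (t : K), IsCoprime a b ∧ x = algebraMap O K a * t ∧ y = algebraMap O K b * t := by
  classical
  have : IsDomain O := (IsFractionRing.injective O K).isDomain _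
  let : GCDMonoid O := IsBezout.toGCDDomain O
  obtain ⟨m, n, d, hm, hn⟩ := IsLocalization.surj₂ (nonZeroDivisors O) K x y
  obtain ⟨a, b, ha, hb, hab⟩ := extract_gcd m n
  have hd : algebraMap O K d ≠ 0 := IsFractionRing.to_map_ne_zero_of_mem_nonZeroDivisors d.2
  refine ⟨a, b, algebraMap O K (gcd m n) / algebraMap O K d,
    (gcd_isUnit_iff a b).1 hab, ?_, ?_⟩
  · rw [mul_div_assoc', eq_div_iff hd, hm, mul_comm, ← map_mul, ← ha]
  · rw [mul_div_assoc', eq_div_iff hd, hn, mul_comm, ← map_mul, ← hb]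

theorem exists_SL2_row_one_mul_eq_zero (x y : K) :
    ∃ A : SL(2, O), algebraMap O K (A 1 0) * x + algebraMap O K (A 1 1) * y = 0 := by
  obtain ⟨a, b, t, hab, rfl, rfl⟩ := exists_isCoprime_eq_algebraMap_mul O x y
  obtain ⟨A, h₀, h₁⟩ := hab.symm.neg_left.exists_SL2_row 1
  refine ⟨A, ?_⟩
  rw [h₀, h₁, map_neg]
  ring

end Bezout

section Symplectic

variable {l R : Type*} [CommRing R]

/-- Membership of a symplectic matrix in the standard Borel subgroup of `Sp₂ₙ`, the stabilizer of
the flag of the ordered basis `e₁, …, eₙ, fₙ, …, f₁`: in that order the matrix is upper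
triangular. -/
def IsBorel [Preorder l] (b : Matrix (l ⊕ l) (l ⊕ l) R) : Prop :=
  b.BlockTriangular fun q => toLex (Sum.map id OrderDual.toDual q)

theorem isBorel_iff [Preorder l] {b : Matrix (l ⊕ l) (l ⊕ l) R} :
    IsBorel b ↔ (∀ i j, b (inr i) (inl j) = 0) ∧ (∀ i j, j < i → b (inl i) (inl j) = 0) ∧
      ∀ i j, i < j → b (inr i) (inr j) = 0 := by
  simp only [IsBorel, BlockTriangular, Sum.forall, Sum.map_inl, Sum.map_inr, id_eq,
    Sum.Lex.inl_lt_inl_iff, Sum.Lex.inr_lt_inr_iff, Sum.Lex.inl_lt_inr, Sum.Lex.not_inr_lt_inl,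
    OrderDual.toDual_lt_toDual]
  grind

variable [Fintype l] [DecidableEq l]

/-- The element of `Sp₂ₙ(R)` acting on the `i`-th hyperbolic plane `⟨eᵢ, fᵢ⟩` by `A i ∈ SL₂(R)`. -/
def hyperbolicPlanes (A : l → SL(2, R)) : symplecticGroup l R :=
  ⟨fromBlocks (diagonal fun i => A i 0 0) (diagonal fun i => A i 0 1)
      (diagonal fun i => A i 1 0) (diagonal fun i => A i 1 1), by
    have det_eq_one (i : l) : A i 0 0 * A i 1 1 - A i 0 1 * A i 1 0 = 1 := by
      rw [← det_fin_two, (A i).det_coe]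
    simp [SymplecticGroup.fromBlocks_mem_iff, mul_comm, diagonal_sub, det_eq_one,
      ← Pi.one_def]⟩

/-- The element of the Siegel Levi of `Sp₂ₙ(R)` acting on the Lagrangian spanned by the `eᵢ`
by `A ∈ SLₙ(R)`. -/
def siegelLevi (A : SpecialLinearGroup l R) : symplecticGroup l R :=
  ⟨fromBlocks A 0 0 (A⁻¹ : SpecialLinearGroup l R)ᵀ, by
    simp [SymplecticGroup.fromBlocks_mem_iff, ← transpose_mul, adjugate_mul]⟩

theorem apply_inr_eq_zero_of_col {g : Matrix (l ⊕ l) (l ⊕ l) R} (hg : g ∈ symplecticGroup l R)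
    {i : l} (hi : ∀ q, q ≠ inl i → g q (inl i) = 0) {j : l ⊕ l} (hj : j ≠ inr i) :
    g (inr i) j = 0 := by
  have pairing (q : l ⊕ l) : g (inl i) (inl i) * g (inr i) q = -J l R (inl i) q := by
    have form := congr_fun₂ (SymplecticGroup.mem_iff'.1 hg) (inl i) q
    rw [Matrix.mul_assoc, mul_apply, Fintype.sum_eq_single (inl i) fun r hr => by simp [hi r hr]]
      at form
    rw [← form]
    simp [J, mul_apply, one_apply]
  have diag_mul_eq_one : g (inl i) (inl i) * g (inr i) (inr i) = 1 := by
    simpa [J] using pairing (inr i)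
  have diag_mul_eq_zero : g (inl i) (inl i) * g (inr i) j = 0 := by
    rw [pairing]
    cases j <;> simp_all [J, one_apply, eq_comm]
  exact (IsUnit.of_mul_eq_one _ diag_mul_eq_one).mul_right_eq_zero.1 diag_mul_eq_zero

end Symplectic

section Iwasawa

variable (O : Type*) {K : Type*} [CommRing O] [IsBezout O] [Field K] [Algebra O K]
  [IsFractionRing O K]

theorem exists_mulVec_inr_eq_zero {l : Type*} [Fintype l] [DecidableEq l] (v : l ⊕ l → K) :
    ∃ k : symplecticGroup l O, ∀ i, (k.1.map (algebraMap O K) *ᵥ v) (inr i) = 0 := by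
  choose A hA using fun i => exists_SL2_row_one_mul_eq_zero O (v (inl i)) (v (inr i))
  refine ⟨hyperbolicPlanes A, fun i => ?_⟩
  simpa [hyperbolicPlanes, fromBlocks_map, fromBlocks_mulVec, diagonal_map, mulVec_diagonal]
    using hA i

theorem exists_mulVec_eq_zero_of_ne (v : Fin 2 ⊕ Fin 2 → K) :
    ∃ k : symplecticGroup (Fin 2) O,
      ∀ q, q ≠ inl 0 → (k.1.map (algebraMap O K) *ᵥ v) q = 0 := by
  obtain ⟨k, hk⟩ := exists_mulVec_inr_eq_zero O v
  set w := k.1.map (algebraMap O K) *ᵥ v with hw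
  obtain ⟨A, hA⟩ := exists_SL2_row_one_mul_eq_zero O (w (inl 0)) (w (inl 1))
  refine ⟨siegelLevi A * k, ?_⟩
  have hr : w ∘ inr = 0 := funext hk
  rw [Submonoid.coe_mul, Matrix.map_mul, ← mulVec_mulVec, ← hw]
  rintro (i | i) hi
  · obtain rfl : i = 1 := by grind
    simpa [siegelLevi, fromBlocks_map, fromBlocks_mulVec, hr, mulVec, dotProduct] using hA
  · simp [siegelLevi, fromBlocks_map, fromBlocks_mulVec, hr]

theorem exists_isBorel_mul_of_col {g : Matrix (Fin 2 ⊕ Fin 2) (Fin 2 ⊕ Fin 2) K}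
    (hg : g ∈ symplecticGroup (Fin 2) K) (hcol : ∀ q, q ≠ inl 0 → g q (inl 0) = 0) :
    ∃ k : symplecticGroup (Fin 2) O, IsBorel (k.1.map (algebraMap O K) * g) := by
  have hrow {j : Fin 2 ⊕ Fin 2} (hj : j ≠ inr 0) : g (inr 0) j = 0 :=
    apply_inr_eq_zero_of_col hg hcol hj
  obtain ⟨A, hA⟩ := exists_SL2_row_one_mul_eq_zero O (g (inl 1) (inl 1)) (g (inr 1) (inl 1))
  refine ⟨hyperbolicPlanes (Pi.mulSingle 1 A), ?_⟩
  simp [isBorel_iff, Fin.forall_fin_two, hyperbolicPlanes, fromBlocks_map, mul_apply,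
    diagonal_apply, hcol, hrow, hA]

theorem exists_isBorel_mul {g : Matrix (Fin 2 ⊕ Fin 2) (Fin 2 ⊕ Fin 2) K}
    (hg : g ∈ symplecticGroup (Fin 2) K) :
    ∃ k : symplecticGroup (Fin 2) O, IsBorel (k.1.map (algebraMap O K) * g) := by
  obtain ⟨k₁, hcol⟩ := exists_mulVec_eq_zero_of_ne O (g.col (inl 0))
  obtain ⟨k₂, hk₂⟩ := exists_isBorel_mul_of_col O
    (mul_mem (SymplecticGroup.map_mem k₁.2 (algebraMap O K)) hg) hcol
  refine ⟨k₂ * k₁, ?_⟩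
  rwa [Submonoid.coe_mul, Matrix.map_mul, Matrix.mul_assoc]

theorem exists_eq_map_mul_isBorel {g : Matrix (Fin 2 ⊕ Fin 2) (Fin 2 ⊕ Fin 2) K}
    (hg : g ∈ symplecticGroup (Fin 2) K) :
    ∃ k : symplecticGroup (Fin 2) O, ∃ b ∈ symplecticGroup (Fin 2) K,
      IsBorel b ∧ g = k.1.map (algebraMap O K) * b := by
  obtain ⟨k, hk⟩ := exists_isBorel_mul O hg
  refine ⟨k⁻¹, _, mul_mem (SymplecticGroup.map_mem k.2 (algebraMap O K)) hg, hk, ?_⟩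
  rw [← Matrix.mul_assoc, ← Matrix.map_mul, ← Submonoid.coe_mul, inv_mul_cancel]
  simp

end Iwasawa

section Fin4

/-- The ordering `e₁, e₂, f₁, f₂` of the symplectic basis, with `eᵢ` indexed by `inl i` and `fᵢ` by
`inr i`; it matches the block form of `J4`. -/
abbrev hyperbolicIndex : Fin 2 ⊕ Fin 2 ≃ Fin 4 := finSumFinEquiv

variable {R : Type*} [CommRing R]

theorem J4_submatrix_hyperbolicIndex :
    (J4 R).submatrix hyperbolicIndex hyperbolicIndex = -J (Fin 2) R := by
  ext (i | i) (j | j) <;> fin_cases i <;> fin_cases j <;> simp [J4, J] <;> rfl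

theorem submatrix_hyperbolicIndex_mem_symplecticGroup_iff {g : Matrix (Fin 4) (Fin 4) R} :
    g.submatrix hyperbolicIndex hyperbolicIndex ∈ symplecticGroup (Fin 2) R ↔
      g.transpose * J4 R * g = J4 R := by
  rw [SymplecticGroup.mem_iff', ← neg_inj, ← J4_submatrix_hyperbolicIndex, ← Matrix.neg_mul,
    ← Matrix.mul_neg, ← J4_submatrix_hyperbolicIndex, transpose_submatrix, submatrix_mul_equiv,
    submatrix_mul_equiv]
  exact ((reindex hyperbolicIndex hyperbolicIndex).symm.apply_eq_iff_eq
    (x := g.transpose * J4 R * g) (y := J4 R))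

theorem IsBorel.apply_eq_zero_of_mem_subBorelPos {b : Matrix (Fin 4) (Fin 4) R}
    (hb : IsBorel (b.submatrix hyperbolicIndex hyperbolicIndex)) {q : Fin 4 × Fin 4}
    (hq : q ∈ subBorelPos) : b q.1 q.2 = 0 := by
  obtain ⟨lower_left, upper_left, lower_right⟩ := isBorel_iff.1 hb
  rcases hq with rfl | rfl | rfl | rfl | rfl | rfl
  exacts [upper_left 1 0 one_pos, lower_left 0 0, lower_left 0 1, lower_right 0 1 one_pos,
    lower_left 1 0, lower_left 1 1]

end Fin4

theorem stmt_14_general (O : Type*) {K : Type*} [CommRing O] [IsBezout O] [Field K] [Algebra O K]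
    [IsFractionRing O K] (g : Matrix (Fin 4) (Fin 4) K)
    (hg : g.transpose * J4 K * g = J4 K) :
    ∃ k b : Matrix (Fin 4) (Fin 4) K,
      (∀ i j, ∃ c : O, algebraMap O K c = k i j) ∧
      k.transpose * J4 K * k = J4 K ∧
      b.transpose * J4 K * b = J4 K ∧
      (∀ q ∈ subBorelPos, b q.1 q.2 = 0) ∧
      g = k * b := by
  let e := hyperbolicIndex
  obtain ⟨k, b, hb, hborel, hkb⟩ :=
    exists_eq_map_mul_isBorel O (submatrix_hyperbolicIndex_mem_symplecticGroup_iff.2 hg)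
  refine ⟨(k.1.map (algebraMap O K)).submatrix e.symm e.symm, b.submatrix e.symm e.symm,
    fun _ _ => ⟨_, rfl⟩, ?_, ?_, fun q hq => ?_, ?_⟩
  · rw [← submatrix_hyperbolicIndex_mem_symplecticGroup_iff]
    simpa [e] using SymplecticGroup.map_mem k.2 (algebraMap O K)
  · rw [← submatrix_hyperbolicIndex_mem_symplecticGroup_iff]
    simpa [e] using hb
  · refine IsBorel.apply_eq_zero_of_mem_subBorelPos ?_ hq
    simpa [e] using hborel
  · rw [submatrix_mul_equiv, ← hkb]
    simp [e]

/-- Iwasawa decomposition `Sp₄(ℚ_p) = Sp₄(ℤ_p)·B(ℚ_p)` (Section 4.2): every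
symplectic `g` over `ℚ_p` factors as `g = k·b` with `k` symplectic having
`ℤ_p`-entries and `b` symplectic vanishing at the six sub-Borel positions. -/
theorem stmt_14 (p : ℕ) [Fact p.Prime] (g : Matrix (Fin 4) (Fin 4) ℚ_[p])
    (hg : g.transpose * J4 ℚ_[p] * g = J4 ℚ_[p]) :
    ∃ k b : Matrix (Fin 4) (Fin 4) ℚ_[p],
      (∀ i j, ∃ c : ℤ_[p], (c : ℚ_[p]) = k i j) ∧
      k.transpose * J4 ℚ_[p] * k = J4 ℚ_[p] ∧
      b.transpose * J4 ℚ_[p] * b = J4 ℚ_[p] ∧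
      (∀ q ∈ subBorelPos, b q.1 q.2 = 0) ∧
      g = k * b := by
  exact stmt_14_general ℤ_[p] g hg
end
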